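/- arXiv:1104.5031 — 5 statements merged into one kernel-verified Lean document; each statement's English description precedes it below -/
import Mathlib

section
/- Let a, b ∈ ℚ with b ≠ 0 and 4a³ + 27b² ≠ 0, let j = −1728·(4a)³/(−16(4a³+27b²)), and let f(x) = x⁴ − 4ax³ + 6a²x² + 4(7a³ + 54b²)x + (17a⁴ + 108ab²). Then f has a rational root if and only if there exists t ∈ ℚ with j = −4t³(t+8). -/
/-!
Put `D = 4a³ + 27b²`, `c = 3a` and `s = r - a`. The quartic becomes `s⁴ + 4D(2s + c)`, and
`j D = 256 c³`. When `s t = 4c`, these combine to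
`t⁴ (s⁴ + 4D(2s + c)) = c D (j + 4t³(t + 8))`, so for `c ≠ 0` the substitution `t = 4c / s`
exchanges the roots `s` with the solutions `t` of `j = -4t³(t + 8)`.
For `4c = 0` both sides are solved by zero.
-/

section CommRing

variable {R : Type*} [CommRing R]

theorem auxiliary_quartic_eq_shifted (a b r : R) :
    r ^ 4 - 4 * a * r ^ 3 + 6 * a ^ 2 * r ^ 2
        + 4 * (7 * a ^ 3 + 54 * b ^ 2) * r + (17 * a ^ 4 + 108 * a * b ^ 2) =
      (r - a) ^ 4 + 4 * (4 * a ^ 3 + 27 * b ^ 2) * (2 * (r - a) + 3 * a) := by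
  ring

variable {c D j s t : R}

theorem pow_four_mul_shifted_quartic (hj : j * D = 256 * c ^ 3) (hst : s * t = 4 * c) :
    t ^ 4 * (s ^ 4 + 4 * D * (2 * s + c)) = c * D * (j - -4 * t ^ 3 * (t + 8)) :=
  calc
    t ^ 4 * (s ^ 4 + 4 * D * (2 * s + c))
        = (s * t) ^ 4 + 4 * D * t ^ 3 * (2 * (s * t) + c * t) := by ring
    _ = c * (256 * c ^ 3) + 4 * D * t ^ 3 * (2 * (4 * c) + c * t) := by rw [hst]; ring
    _ = c * D * (j - -4 * t ^ 3 * (t + 8)) := by rw [← hj]; ring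

theorem shifted_quartic_eq_zero_iff [NoZeroDivisors R] (hj : j * D = 256 * c ^ 3)
    (hst : s * t = 4 * c) (hc : c ≠ 0) (hD : D ≠ 0) (ht : t ≠ 0) :
    s ^ 4 + 4 * D * (2 * s + c) = 0 ↔ j = -4 * t ^ 3 * (t + 8) := by
  rw [← mul_eq_zero_iff_left (pow_ne_zero 4 ht), pow_four_mul_shifted_quartic hj hst,
    mul_eq_zero_iff_left (mul_ne_zero hc hD), sub_eq_zero]

end CommRing

section Field

variable {K : Type*} [Field K]

theorem exists_shifted_quartic_root_iff {c D j : K} (hD : D ≠ 0) (hj : j * D = 256 * c ^ 3) :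
    (∃ s, s ^ 4 + 4 * D * (2 * s + c) = 0) ↔ ∃ t, j = -4 * t ^ 3 * (t + 8) := by
  have hj_four : j * D = 4 * (4 * c) ^ 3 := by rw [hj]; ring
  rcases eq_or_ne (4 * c) 0 with h4c | h4c
  · have hj_zero : j = 0 := by simpa [h4c, hD] using hj_four
    exact ⟨fun _ => ⟨0, by simp [hj_zero]⟩, fun _ => ⟨0, by linear_combination D * h4c⟩⟩
  have hc : c ≠ 0 := right_ne_zero_of_mul h4c
  constructor
  · rintro ⟨s, hs⟩
    have hs_ne : s ≠ 0 := by
      rintro rfl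
      exact mul_ne_zero h4c hD (by linear_combination hs)
    exact ⟨4 * c / s, (shifted_quartic_eq_zero_iff hj (mul_div_cancel₀ _ hs_ne) hc hD
      (div_ne_zero h4c hs_ne)).mp hs⟩
  · rintro ⟨t, ht⟩
    have hj_ne : j * D ≠ 0 :=
      hj_four ▸ mul_ne_zero (left_ne_zero_of_mul h4c) (pow_ne_zero 3 h4c)
    have ht_ne : t ≠ 0 := by
      rintro rfl
      exact left_ne_zero_of_mul hj_ne (by simpa using ht)
    exact ⟨4 * c / t, (shifted_quartic_eq_zero_iff hj (div_mul_cancel₀ _ ht_ne) hc hD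
      ht_ne).mpr ht⟩

theorem j_invariant_mul_eq {a D : K} (h2 : (2 : K) ≠ 0) (hD : D ≠ 0) :
    -1728 * (4 * a) ^ 3 / (-16 * D) * D = 256 * (3 * a) ^ 3 := by
  have h16 : (-16 : K) ≠ 0 := by
    rw [show (-16 : K) = -2 ^ 4 by norm_num]
    exact neg_ne_zero.mpr (pow_ne_zero 4 h2)
  rw [div_mul_eq_mul_div, div_eq_iff (mul_ne_zero h16 hD)]
  ring

theorem stmt_4_general (h2 : (2 : K) ≠ 0) (a b : K) (hΔ : 4 * a ^ 3 + 27 * b ^ 2 ≠ 0)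
    (j : K) (hj : j = -1728 * (4 * a) ^ 3 / (-16 * (4 * a ^ 3 + 27 * b ^ 2))) :
    (∃ r : K, r ^ 4 - 4 * a * r ^ 3 + 6 * a ^ 2 * r ^ 2
        + 4 * (7 * a ^ 3 + 54 * b ^ 2) * r + (17 * a ^ 4 + 108 * a * b ^ 2) = 0) ↔
      ∃ t : K, j = -4 * t ^ 3 * (t + 8) := by
  have hjD : j * (4 * a ^ 3 + 27 * b ^ 2) = 256 * (3 * a) ^ 3 := by
    rw [hj, j_invariant_mul_eq h2 hΔ]
  rw [← exists_shifted_quartic_root_iff hΔ hjD]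
  exact (Equiv.subRight a).exists_congr fun r => by
    rw [auxiliary_quartic_eq_shifted, Equiv.subRight_apply]

end Field

theorem stmt_4 (a b : ℚ) (hb : b ≠ 0) (hΔ : 4 * a ^ 3 + 27 * b ^ 2 ≠ 0)
    (j : ℚ) (hj : j = -1728 * (4 * a) ^ 3 / (-16 * (4 * a ^ 3 + 27 * b ^ 2))) :
    (∃ r : ℚ, r ^ 4 - 4 * a * r ^ 3 + 6 * a ^ 2 * r ^ 2
        + 4 * (7 * a ^ 3 + 54 * b ^ 2) * r + (17 * a ^ 4 + 108 * a * b ^ 2) = 0) ↔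
      ∃ t : ℚ, j = -4 * t ^ 3 * (t + 8) :=
  stmt_4_general two_ne_zero a b hΔ j hj
end

section
/- The only subgroup G of GL₂(ℤ/8ℤ) that (i) surjects onto GL₂(ℤ/4ℤ) under the reduction map mod 4, (ii) surjects onto (ℤ/8ℤ)^× under the determinant map, and (iii) has a quotient group isomorphic to C₂ × C₂ × C₂, is GL₂(ℤ/8ℤ) itself. -/
/-!
Let `E` be a commutative quotient of exponent two of `G`. If no element of `G` in the kernel of
reduction mod 4 has a determinant other than `1`, then these kernel elements `1 + 4A` have even
trace, and `A` is mod 2 a sum of matrices `C` with `C² ≡ 0`. Each factor `1 + 4C` is the square of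
an element of `G`, namely of any lift of `1 + 2C` mod 4, so `G → E` kills it and factors through
`GL₂(ℤ/4ℤ)`. Over a local ring, the image of `M` in a commutative group is that of
`upperRightHom t * diag(1, det M)` for some `t`, which leaves at most four values over `ℤ/4ℤ` in
exponent two. So when `E` has more than four elements, `G` contains a kernel element of determinant
`5`, and together with the squares it generates the whole kernel.
-/

open Matrix hiding swap
open Matrix.GeneralLinearGroup (upperRightHom swap)

namespace GLTwo

section LocalRing

variable {R A : Type*} [CommRing R] [CommGroup A]

/-- The matrices `diag(1, u)` of `GL₂(R)`, as a homomorphism in `u`. Together with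
`Matrix.GeneralLinearGroup.upperRightHom` they account for all values of homomorphisms from `GL₂`
of a local ring to commutative groups. -/
def lowerRightHom : Rˣ →* GL (Fin 2) R where
  toFun u := ⟨!![1, 0; 0, u], !![1, 0; 0, ↑u⁻¹], by simp [one_fin_two], by simp [one_fin_two]⟩
  map_one' := by simp [Units.ext_iff, one_fin_two]
  map_mul' u v := by simp [Units.ext_iff]

lemma eq_swap_mul_upperRightHom_mul (M : GL (Fin 2) R) {a : Rˣ} (ha : M 0 0 = a) :
    M = swap R 0 1 * upperRightHom (M 1 0 * ↑a⁻¹) * lowerRightHom a * swap R 0 1 *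
      lowerRightHom (M.det * a⁻¹) * upperRightHom (↑a⁻¹ * M 0 1) := by
  have swap_eq : Matrix.swap R (0 : Fin 2) 1 = !![0, 1; 1, 0] := by
    ext i j
    fin_cases i <;> fin_cases j <;> simp [Matrix.swap]
  have hdet : M.det.1 * ↑a⁻¹ = M 1 1 - M 1 0 * ↑a⁻¹ * M 0 1 := by
    rw [GeneralLinearGroup.val_det_apply, det_fin_two, ha]
    linear_combination M 1 1 * a.mul_inv
  refine Units.ext ((eta_fin_two M.1).trans ?_)
  simp [-GeneralLinearGroup.val_det_apply, swap_eq, lowerRightHom, ha, hdet, mul_assoc]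

lemma exists_map_eq_of_isUnit (F : GL (Fin 2) R →* A) {M : GL (Fin 2) R} (hM : IsUnit (M 0 0)) :
    ∃ t, F M = F (upperRightHom t) * F (lowerRightHom M.det) := by
  obtain ⟨a, ha⟩ := hM
  have hswap : F (swap R 0 1) * F (swap R 0 1) = 1 := by
    rw [← map_mul, show swap R (0 : Fin 2) 1 * swap R 0 1 = 1 from Units.ext (swap_mul_self 0 1),
      map_one]
  refine ⟨M 1 0 * ↑a⁻¹ + ↑a⁻¹ * M 0 1, ?_⟩
  conv_lhs => rw [eq_swap_mul_upperRightHom_mul M ha.symm]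
  simp only [map_mul, map_inv, AddChar.map_add_eq_mul]
  calc _ = F (swap R 0 1) * F (swap R 0 1) * (F (lowerRightHom a) * (F (lowerRightHom a))⁻¹) *
        (F (upperRightHom (M 1 0 * ↑a⁻¹)) * F (upperRightHom (↑a⁻¹ * M 0 1)) *
          F (lowerRightHom M.det)) := by ac_rfl
    _ = _ := by rw [hswap, mul_inv_cancel, one_mul, one_mul]

lemma exists_isUnit_upperRightHom_mul_apply [IsLocalRing R] (M : GL (Fin 2) R) :
    ∃ r : R, IsUnit ((upperRightHom r * M) 0 0) := by
  have hentry (r : R) : (upperRightHom r * M) 0 0 = M 0 0 + r * M 1 0 := by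
    simp [mul_apply]
  by_cases h00 : IsUnit (M 0 0)
  · exact ⟨0, by rwa [hentry, zero_mul, add_zero]⟩
  have hdet : IsUnit (M 0 0 * M 1 1 + -(M 0 1 * M 1 0)) := by
    rw [← sub_eq_add_neg, ← det_fin_two]
    exact M.det.isUnit
  have h10 : IsUnit (M 1 0) :=
    (IsLocalRing.isUnit_or_isUnit_of_isUnit_add hdet).elim
      (fun h ↦ absurd (isUnit_of_mul_isUnit_left h) h00)
      (fun h ↦ isUnit_of_mul_isUnit_right (IsUnit.neg_iff _ |>.mp h))
  have hsum : IsUnit (M 0 0 + 1 * M 1 0 + -M 0 0) := by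
    rwa [one_mul, add_neg_cancel_comm]
  refine ⟨1, hentry 1 ▸ (IsLocalRing.isUnit_or_isUnit_of_isUnit_add hsum).resolve_right ?_⟩
  rwa [IsUnit.neg_iff]

lemma exists_map_eq [IsLocalRing R] (F : GL (Fin 2) R →* A) (M : GL (Fin 2) R) :
    ∃ t, F M = F (upperRightHom t) * F (lowerRightHom M.det) := by
  obtain ⟨r, hr⟩ := exists_isUnit_upperRightHom_mul_apply M
  obtain ⟨t, ht⟩ := exists_map_eq_of_isUnit F hr
  have hdet : (upperRightHom r * M).det = M.det := by
    ext
    simp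
  refine ⟨-r + t, ?_⟩
  calc F M = F (upperRightHom (-r)) * F (upperRightHom r * M) := by
        rw [← map_mul, ← mul_assoc, ← AddChar.map_add_eq_mul, neg_add_cancel,
          AddChar.map_zero_eq_one, one_mul]
    _ = F (upperRightHom (-r + t)) * F (lowerRightHom M.det) := by
        rw [ht, hdet, ← mul_assoc, ← map_mul, ← AddChar.map_add_eq_mul]

end LocalRing

section ModFour

instance : IsLocalRing (ZMod 4) :=
  have : Nontrivial (ZMod 4) := ZMod.nontrivial_iff.mpr (by decide)
  .of_isUnit_or_isUnit_one_sub_self (by decide)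

lemma natCard_le_four_of_surjective {E : Type*} [CommGroup E] (hE : ∀ e : E, e ^ 2 = 1)
    {F : GL (Fin 2) (ZMod 4) →* E} (hF : Function.Surjective F) : Nat.card E ≤ 4 := by
  let P : Fin 2 × (ZMod 4)ˣ → E := fun x ↦ F (upperRightHom 1) ^ x.1.1 * F (lowerRightHom x.2)
  have hP : Function.Surjective P := by
    intro e
    obtain ⟨M, rfl⟩ := hF e
    obtain ⟨t, ht⟩ := exists_map_eq F M
    refine ⟨(⟨t.val % 2, Nat.mod_lt _ two_pos⟩, M.det), ?_⟩
    rw [ht]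
    simp only [P]
    rw [← pow_eq_pow_mod _ (hE _), ← map_pow, ← AddChar.map_nsmul_eq_pow, nsmul_one,
      ZMod.natCast_zmod_val]
  calc Nat.card E ≤ Nat.card (Fin 2 × (ZMod 4)ˣ) := Nat.card_le_card_of_surjective P hP
    _ = 4 := by rw [Nat.card_eq_fintype_card]; decide

end ModFour

section SquareKernel

variable {R S n : Type*} [CommRing R] [CommRing S] [Fintype n] [DecidableEq n]

lemma exists_eq_add_smul_of_map_eq {φ : R →+* S} {r : R} (hφ : RingHom.ker φ ≤ Ideal.span {r})
    {g h : GL n R} (hgh : g.map φ = h.map φ) : ∃ B : Matrix n n R, g.1 = h.1 + r • B := by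
  have entry (i j : n) : ∃ b, g i j - h i j = r * b :=
    Ideal.mem_span_singleton.mp <| hφ <| by
      rw [RingHom.sub_mem_ker_iff]
      exact congrArg (fun M : GL n S ↦ M i j) hgh
  choose B hB using entry
  refine ⟨of B, ?_⟩
  ext i j
  simpa using eq_add_of_sub_eq' (hB i j)

lemma sq_one_add_two_smul_add_four_smul (h8 : (8 : R) = 0) (B C : Matrix n n R) :
    (1 + (2 : R) • C + (4 : R) • B) ^ 2 = 1 + (4 : R) • C + (4 : R) • C ^ 2 := by
  have expand : (1 + (2 : R) • C + (4 : R) • B) ^ 2 = 1 + (4 : R) • C + (4 : R) • C ^ 2 +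
      (8 : R) • (B + C * B + B * C + (2 : R) • B ^ 2) := by
    simp only [ofNat_smul_eq_nsmul]
    noncomm_ring
  rw [expand, h8, zero_smul, add_zero]

lemma one_add_four_smul_mul (h8 : (8 : R) = 0) (X Y : Matrix n n R) :
    (1 + (4 : R) • X) * (1 + (4 : R) • Y) = 1 + (4 : R) • (X + Y) := by
  have expand : (1 + (4 : R) • X) * (1 + (4 : R) • Y) =
      1 + (4 : R) • (X + Y) + (8 : R) • ((2 : R) • (X * Y)) := by
    simp only [ofNat_smul_eq_nsmul]
    noncomm_ring
  rw [expand, h8, zero_smul, add_zero]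

lemma det_one_add_four_smul (h8 : (8 : R) = 0) (A : Matrix n n R) :
    (1 + (4 : R) • A).det = 1 + 4 * A.trace := by
  have h16 : (4 : R) ^ 2 = 0 := by linear_combination 2 * h8
  rw [det_one_add_smul, h16, mul_zero, add_zero, mul_comm]

lemma exists_sq_eq_one_add_four_smul {φ : R →+* S} (h8 : (8 : R) = 0)
    (hφ : RingHom.ker φ ≤ Ideal.span {4})
    {G : Subgroup (GL n R)} (hG : G.map (GeneralLinearGroup.map φ) = ⊤)
    {C : Matrix n n R} (hC : (4 : R) • C ^ 2 = 0) :
    ∃ g : G, (g ^ 2).1.1 = 1 + (4 : R) • C := by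
  have hinv : (1 + (2 : R) • C) * (1 - (2 : R) • C) = 1 := by
    have expand : (1 + (2 : R) • C) * (1 - (2 : R) • C) = 1 - (4 : R) • C ^ 2 := by
      simp only [ofNat_smul_eq_nsmul]
      noncomm_ring
    rw [expand, hC, sub_zero]
  let h : GL n R := ⟨_, _, hinv, mul_eq_one_comm.mp hinv⟩
  obtain ⟨g, hg, hgh⟩ : h.map φ ∈ G.map (GeneralLinearGroup.map φ) := hG ▸ Subgroup.mem_top _
  obtain ⟨B, hB⟩ := exists_eq_add_smul_of_map_eq hφ hgh
  refine ⟨⟨g, hg⟩, ?_⟩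
  calc g.1 ^ 2 = (1 + (2 : R) • C + (4 : R) • B) ^ 2 := by rw [hB]
    _ = 1 + (4 : R) • C := by rw [sq_one_add_two_smul_add_four_smul h8, hC, add_zero]

lemma exists_prod_sq_eq_of_det_eq_one {φ : R →+* S} (h8 : (8 : R) = 0)
    (hφ : RingHom.ker φ ≤ Ideal.span {4})
    {G : Subgroup (GL (Fin 2) R)} (hG : G.map (GeneralLinearGroup.map φ) = ⊤)
    {k : GL (Fin 2) R} (hk : k.map φ = 1) (hdet : k.det = 1) :
    ∃ x y z : G, k = (x ^ 2 * y ^ 2 * z ^ 2 : G) := by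
  obtain ⟨A, hA⟩ := exists_eq_add_smul_of_map_eq hφ (hk.trans (map_one _).symm)
  have htrace : 4 * A 0 0 + 4 * A 1 1 = 0 := by
    have h : k.1.det = 1 := congrArg Units.val hdet
    rw [hA, Units.val_one, det_one_add_four_smul h8, trace_fin_two] at h
    linear_combination h
  obtain ⟨x, hx⟩ := exists_sq_eq_one_add_four_smul h8 hφ hG (C := !![0, A 0 1 - A 0 0; 0, 0])
    (by ext i j; fin_cases i <;> fin_cases j <;> simp [sq])
  obtain ⟨y, hy⟩ := exists_sq_eq_one_add_four_smul h8 hφ hG (C := !![0, 0; A 1 0 - A 0 0, 0])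
    (by ext i j; fin_cases i <;> fin_cases j <;> simp [sq])
  obtain ⟨z, hz⟩ := exists_sq_eq_one_add_four_smul h8 hφ hG (C := A 0 0 • !![1, 1; 1, 1])
    (by
      have : 4 * (A 0 0 * A 0 0 + A 0 0 * A 0 0) = 0 := by linear_combination A 0 0 * A 0 0 * h8
      ext i j
      fin_cases i <;> fin_cases j <;> simp [sq, this])
  refine ⟨x, y, z, Units.ext ?_⟩
  have hsum : (4 : R) • A = (4 : R) • (!![0, A 0 1 - A 0 0; 0, 0] + !![0, 0; A 1 0 - A 0 0, 0] +
      A 0 0 • !![1, 1; 1, 1]) := by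
    have : 4 * A 1 1 = 4 * A 0 0 := by linear_combination htrace - A 0 0 * h8
    ext i j
    fin_cases i <;> fin_cases j <;> simp [this]
  simp only [Subgroup.coe_mul, Units.val_mul, hx, hy, hz, one_add_four_smul_mul h8]
  rw [hA, hsum, Units.val_one]

lemma natCard_le_four_of_forall_det_eq_one {φ : R →+* ZMod 4} (h8 : (8 : R) = 0)
    (hφ : RingHom.ker φ ≤ Ideal.span {4})
    {G : Subgroup (GL (Fin 2) R)} (hG : G.map (GeneralLinearGroup.map φ) = ⊤)
    (hdet : ∀ k ∈ G, k.map φ = 1 → k.det = 1)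
    {E : Type*} [CommGroup E] (hE : ∀ e : E, e ^ 2 = 1) {f : G →* E} (hf : Function.Surjective f) :
    Nat.card E ≤ 4 := by
  let π : G →* GL (Fin 2) (ZMod 4) := (GeneralLinearGroup.map φ).domRestrict G
  have hπ : Function.Surjective π := by
    rw [← MonoidHom.range_eq_top, MonoidHom.domRestrict_range, hG]
  have hker : π.ker ≤ f.ker := by
    intro k hk
    obtain ⟨x, y, z, hxyz⟩ := exists_prod_sq_eq_of_det_eq_one h8 hφ hG hk (hdet k k.2 hk)
    rw [MonoidHom.mem_ker, Subtype.ext hxyz]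
    simp only [map_mul, map_pow, hE, mul_one]
  obtain ⟨F, hF⟩ : ∃ F : GL (Fin 2) (ZMod 4) →* E, F.comp π = f :=
    ⟨π.liftOfSurjective hπ ⟨f, hker⟩, π.liftOfRightInverse_comp _ _ ⟨f, hker⟩⟩
  refine natCard_le_four_of_surjective hE (F := F) (.of_comp (g := π) ?_)
  rwa [← MonoidHom.coe_comp, hF]

end SquareKernel

section ModEight

variable {φ : ZMod 8 →+* ZMod 4}

lemma ker_le_span_four : RingHom.ker φ ≤ Ideal.span {4} := by
  obtain rfl : φ = ZMod.castHom (by decide) (ZMod 4) := Subsingleton.elim _ _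
  intro a
  rw [RingHom.mem_ker, Ideal.mem_span_singleton]
  revert a
  decide

lemma det_mul_det_eq_one_of_map_eq_one {k h : GL (Fin 2) (ZMod 8)} (hk : k.map φ = 1)
    (hh : h.map φ = 1) (hk1 : k.det ≠ 1) (hh1 : h.det ≠ 1) : k.det * h.det = 1 := by
  obtain ⟨A, hA⟩ := exists_eq_add_smul_of_map_eq ker_le_span_four (hk.trans (map_one _).symm)
  obtain ⟨B, hB⟩ := exists_eq_add_smul_of_map_eq ker_le_span_four (hh.trans (map_one _).symm)
  have key : ∀ s t : ZMod 8, 1 + 4 * s ≠ 1 → 1 + 4 * t ≠ 1 → (1 + 4 * s) * (1 + 4 * t) = 1 := by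
    decide
  simp only [ne_eq, Units.ext_iff, Units.val_mul, GeneralLinearGroup.val_det_apply, hA, hB,
    Units.val_one, det_one_add_four_smul (R := ZMod 8) rfl] at hk1 hh1 ⊢
  exact key _ _ hk1 hh1

lemma eq_top_of_exists_det_ne_one {G : Subgroup (GL (Fin 2) (ZMod 8))}
    (hG : G.map (GeneralLinearGroup.map φ) = ⊤)
    (hdet : ∃ k ∈ G, k.map φ = 1 ∧ k.det ≠ 1) : G = ⊤ := by
  obtain ⟨k, hkG, hk, hk1⟩ := hdet
  have mem_of_det_eq_one {h} (hh : h.map φ = 1) (hh1 : h.det = 1) : h ∈ G := by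
    obtain ⟨x, y, z, rfl⟩ := exists_prod_sq_eq_of_det_eq_one rfl ker_le_span_four hG hh hh1
    exact SetLike.coe_mem _
  have hker : (GeneralLinearGroup.map φ).ker ≤ G := by
    intro h (hh : h.map φ = 1)
    by_cases hh1 : h.det = 1
    · exact mem_of_det_eq_one hh hh1
    · rw [← mul_mem_cancel_right hkG]
      refine mem_of_det_eq_one (h := h * k) ?_ ?_
      · rw [map_mul, hh, hk, one_mul]
      · rw [map_mul, det_mul_det_eq_one_of_map_eq_one hh hk hh1 hk1]
  rw [← Subgroup.comap_map_eq_self hker, hG, Subgroup.comap_top]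

end ModEight

end GLTwo

open GLTwo

theorem stmt_5_general {φ : ZMod 8 →+* ZMod 4} {G : Subgroup (GL (Fin 2) (ZMod 8))}
    (hmod4 : G.map (GeneralLinearGroup.map φ) = ⊤)
    {E : Type*} [CommGroup E] (hE : ∀ e : E, e ^ 2 = 1) (hcard : 4 < Nat.card E)
    {f : G →* E} (hf : Function.Surjective f) : G = ⊤ := by
  apply eq_top_of_exists_det_ne_one hmod4
  by_contra! hdet
  exact hcard.not_ge <|
    natCard_le_four_of_forall_det_eq_one rfl ker_le_span_four hmod4 hdet hE hf

theorem stmt_5 (G : Subgroup (GL (Fin 2) (ZMod 8)))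
    (hmod4 : Subgroup.map
      (Matrix.GeneralLinearGroup.map (n := Fin 2)
        (ZMod.castHom (show (4:ℕ) ∣ 8 by norm_num) (ZMod 4))) G = ⊤)
    (hdet : Subgroup.map (Matrix.GeneralLinearGroup.det) G = ⊤)
    (hquot : ∃ (N : Subgroup G) (_ : N.Normal),
      Nonempty ((G ⧸ N) ≃*
        (Multiplicative (ZMod 2) × Multiplicative (ZMod 2) × Multiplicative (ZMod 2)))) :
    G = ⊤ := by
  obtain ⟨N, _, ⟨e⟩⟩ := hquot
  exact stmt_5_general hmod4 (by decide) (by simp [Nat.card_eq_fintype_card])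
    (f := e.toMonoidHom.comp (QuotientGroup.mk' N))
    (e.surjective.comp (QuotientGroup.mk'_surjective N))
end

section
/- Let a, b be indeterminates and let f(x) = x⁴ − 4ax³ + 6a²x² + 4(7a³ + 54b²)x + (17a⁴ + 108ab²) ∈ ℤ[a,b][x]. Then the discriminant of f (as a quartic in x) equals 3⁶ · b² · Δ³, where Δ = −16(4a³ + 27b²). In particular, for a, b ∈ ℚ with b ≠ 0 and 4a³ + 27b² ≠ 0, f has no repeated roots. -/
open Polynomial

/-!
Writing `δ = 4a³ + 27b²`, the quartic is `(x - a)⁴ + 8δ(x - a) + 12aδ`, and its discriminant does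
not change under the translation `x ↦ x + a`. The discriminant of `x⁴ + qx + s` is `256s³ - 27q⁴`,
which here equals `2¹² · 3³ · δ³(4a³ - δ) = -2¹² · 3⁶ · b²δ³`.
-/

section discrOfRoots

variable {ι R : Type*} [Fintype ι] [LinearOrder ι] [CommRing R]

/-- The discriminant of the monic polynomial with roots `r i`, counted with multiplicity, as a
function of these roots. The order on `ι` only serves to list each pair of indices once. -/
def discrOfRoots (r : ι → R) : R :=
  ∏ p ∈ Finset.univ.filter (fun p : ι × ι => p.1 < p.2), (r p.1 - r p.2) ^ 2

theorem discrOfRoots_sub_const (r : ι → R) (c : R) :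
    discrOfRoots (fun i => r i - c) = discrOfRoots r := by
  simp only [discrOfRoots, sub_sub_sub_cancel_right]

theorem discrOfRoots_ne_zero_iff [IsDomain R] {r : ι → R} :
    discrOfRoots r ≠ 0 ↔ Function.Injective r := by
  simp only [discrOfRoots, Finset.prod_ne_zero_iff, Finset.mem_filter_univ, ne_eq,
    pow_eq_zero_iff two_ne_zero, sub_eq_zero, Prod.forall]
  exact ⟨fun h => .of_lt_imp_ne fun i j hij => h i j hij, fun h i j hij => h.ne hij.ne⟩

end discrOfRoots

section Quartic

variable {R : Type*} [CommRing R]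

theorem discrOfRoots_fin_four (r : Fin 4 → R) :
    discrOfRoots r = ((r 0 - r 1) * (r 0 - r 2) * (r 0 - r 3) * (r 1 - r 2) * (r 1 - r 3)
      * (r 2 - r 3)) ^ 2 := by
  have pairs : Finset.univ.filter (fun p : Fin 4 × Fin 4 => p.1 < p.2)
      = {(0, 1), (0, 2), (0, 3), (1, 2), (1, 3), (2, 3)} := by decide
  simp only [discrOfRoots, Finset.prod_pow]
  rw [pairs]
  simp [mul_assoc]

theorem prod_X_sub_C_fin_four (r : Fin 4 → R) :
    ∏ i, (X - C (r i)) = X ^ 4 - C (r 0 + r 1 + r 2 + r 3) * X ^ 3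
      + C (r 0 * r 1 + r 0 * r 2 + r 0 * r 3 + r 1 * r 2 + r 1 * r 3 + r 2 * r 3) * X ^ 2
      - C (r 0 * r 1 * r 2 + r 0 * r 1 * r 3 + r 0 * r 2 * r 3 + r 1 * r 2 * r 3) * X
      + C (r 0 * r 1 * r 2 * r 3) := by
  simp only [Fin.prod_univ_four, map_add, map_mul]
  ring

theorem coeffs_eq_of_monic_quartic_eq {a₀ a₁ a₂ a₃ b₀ b₁ b₂ b₃ : R}
    (h : X ^ 4 - C a₃ * X ^ 3 + C a₂ * X ^ 2 - C a₁ * X + C a₀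
      = X ^ 4 - C b₃ * X ^ 3 + C b₂ * X ^ 2 - C b₁ * X + C b₀) :
    a₃ = b₃ ∧ a₂ = b₂ ∧ a₁ = b₁ ∧ a₀ = b₀ := by
  have coeff_eq (n : ℕ) := congrArg (coeff · n) h
  exact ⟨by simpa [coeff_X, coeff_C, coeff_X_pow] using coeff_eq 3,
    by simpa [coeff_X, coeff_C, coeff_X_pow] using coeff_eq 2,
    by simpa [coeff_X, coeff_C, coeff_X_pow] using coeff_eq 1,
    by simpa [coeff_X, coeff_C, coeff_X_pow] using coeff_eq 0⟩

theorem discrOfRoots_of_depressed_quartic {r : Fin 4 → R} {p q s : R}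
    (h : ∏ i, (X - C (r i)) = X ^ 4 + C p * X ^ 2 + C q * X + C s) :
    discrOfRoots r = 16 * p ^ 4 * s - 4 * p ^ 3 * q ^ 2 - 128 * p ^ 2 * s ^ 2
      + 144 * p * q ^ 2 * s - 27 * q ^ 4 + 256 * s ^ 3 := by
  have quartic_eq : X ^ 4 + C p * X ^ 2 + C q * X + C s
      = X ^ 4 - C 0 * X ^ 3 + C p * X ^ 2 - C (-q) * X + C s := by
    simp only [map_zero, map_neg]
    ring
  rw [prod_X_sub_C_fin_four, quartic_eq] at h
  obtain ⟨sum_eq_zero, rfl, hq, rfl⟩ := coeffs_eq_of_monic_quartic_eq h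
  obtain rfl := neg_eq_iff_eq_neg.mpr hq
  have last_root : r 3 = -(r 0 + r 1 + r 2) := by linear_combination sum_eq_zero
  rw [discrOfRoots_fin_four, last_root]
  ring

end Quartic

theorem prod_X_sub_C_comp_X_add_C {ι R : Type*} [Fintype ι] [CommRing R] (r : ι → R) (c : R) :
    (∏ i, (X - C (r i))).comp (X + C c) = ∏ i, (X - C (r i - c)) := by
  simp only [prod_comp, sub_comp, X_comp, C_comp, map_sub, sub_sub_eq_add_sub]

section auxPoly

variable {R : Type*} [CommRing R]

/-- The auxiliary quartic associated to the coefficients `a`, `b` of the Weierstrass equation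
`y² = x³ + ax + b`. -/
noncomputable def auxPoly (a b : R) : R[X] :=
  X ^ 4 - C (4 * a) * X ^ 3 + C (6 * a ^ 2) * X ^ 2
    + C (4 * (7 * a ^ 3 + 54 * b ^ 2)) * X + C (17 * a ^ 4 + 108 * a * b ^ 2)

theorem map_auxPoly {S : Type*} [CommRing S] (φ : R →+* S) (a b : R) :
    (auxPoly a b).map φ = auxPoly (φ a) (φ b) := by
  simp [auxPoly, map_ofNat φ]

theorem auxPoly_comp_X_add_C (a b : R) :
    (auxPoly a b).comp (X + C a) = X ^ 4 + C (8 * (4 * a ^ 3 + 27 * b ^ 2)) * X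
      + C (12 * a * (4 * a ^ 3 + 27 * b ^ 2)) := by
  simp only [auxPoly, add_comp, sub_comp, mul_comp, pow_comp, X_comp, C_comp, map_add, map_mul,
    map_pow, map_ofNat C, ofNat_comp]
  ring

theorem discrOfRoots_of_auxPoly_eq_prod {a b : R} {r : Fin 4 → R}
    (h : auxPoly a b = ∏ i, (X - C (r i))) :
    discrOfRoots r = 3 ^ 6 * b ^ 2 * (-16 * (4 * a ^ 3 + 27 * b ^ 2)) ^ 3 := by
  have translated : ∏ i, (X - C (r i - a)) = X ^ 4 + C 0 * X ^ 2
      + C (8 * (4 * a ^ 3 + 27 * b ^ 2)) * X + C (12 * a * (4 * a ^ 3 + 27 * b ^ 2)) := by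
    rw [← prod_X_sub_C_comp_X_add_C, ← h, auxPoly_comp_X_add_C, C_0, zero_mul, add_zero]
  rw [← discrOfRoots_sub_const r a, discrOfRoots_of_depressed_quartic translated]
  ring

end auxPoly

theorem stmt_12_general {R S : Type*} [CommRing R] [CommRing S] [IsDomain S] [Algebra R S]
    [FaithfulSMul R S] (a b : R) (r : Fin 4 → S)
    (hr : (auxPoly a b).map (algebraMap R S) = ∏ i, (X - C (r i))) :
    discrOfRoots r
        = algebraMap R S (3 ^ 6 * b ^ 2 * (-16 * (4 * a ^ 3 + 27 * b ^ 2)) ^ 3) ∧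
      (Function.Injective r ↔ (6 : R) ≠ 0 ∧ b ≠ 0 ∧ 4 * a ^ 3 + 27 * b ^ 2 ≠ 0) := by
  have : IsDomain R := (FaithfulSMul.algebraMap_injective R S).isDomain
  have discr_eq : discrOfRoots r
      = algebraMap R S (3 ^ 6 * b ^ 2 * (-16 * (4 * a ^ 3 + 27 * b ^ 2)) ^ 3) := by
    rw [map_auxPoly] at hr
    simpa [map_ofNat (algebraMap R S)] using discrOfRoots_of_auxPoly_eq_prod hr
  have discr_ne_zero_iff : 3 ^ 6 * b ^ 2 * (-16 * (4 * a ^ 3 + 27 * b ^ 2)) ^ 3 ≠ 0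
      ↔ (6 : R) ≠ 0 ∧ b ≠ 0 ∧ 4 * a ^ 3 + 27 * b ^ 2 ≠ 0 := by
    have six_eq : (6 : R) = 2 * 3 := by norm_num
    have sixteen_eq : (16 : R) = 2 ^ 4 := by norm_num
    rw [six_eq, sixteen_eq]
    simp only [ne_eq, mul_eq_zero, pow_eq_zero_iff, neg_eq_zero, OfNat.ofNat_ne_zero,
      not_false_eq_true]
    tauto
  exact ⟨discr_eq, by rw [← discrOfRoots_ne_zero_iff, discr_eq,
    map_ne_zero_iff _ (FaithfulSMul.algebraMap_injective R S), discr_ne_zero_iff]⟩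

theorem stmt_12 (a b : ℚ)
    (f : Polynomial ℚ)
    (hf : f = X ^ 4 - C (4 * a) * X ^ 3 + C (6 * a ^ 2) * X ^ 2
        + C (4 * (7 * a ^ 3 + 54 * b ^ 2)) * X + C (17 * a ^ 4 + 108 * a * b ^ 2))
    (r : Fin 4 → AlgebraicClosure ℚ)
    (hr : f.map (algebraMap ℚ (AlgebraicClosure ℚ)) = ∏ i : Fin 4, (X - C (r i))) :
    (∏ p ∈ Finset.univ.filter (fun p : Fin 4 × Fin 4 => p.1 < p.2), (r p.1 - r p.2) ^ 2)
        = algebraMap ℚ (AlgebraicClosure ℚ)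
            (3 ^ 6 * b ^ 2 * (-16 * (4 * a ^ 3 + 27 * b ^ 2)) ^ 3) ∧
      (b ≠ 0 → 4 * a ^ 3 + 27 * b ^ 2 ≠ 0 → Function.Injective r) :=
  (stmt_12_general a b r (by rwa [hf] at hr)).imp_right fun injective_iff hb hδ =>
    injective_iff.mpr ⟨by norm_num, hb, hδ⟩
end

section
/- For every t ∈ ℚ with t ≠ −8, the elliptic curve y² = x³ − ((3t² + 24t)/(t² − 4t + 12))·x − ((2t² + 28t + 96)/(t² − 4t + 12)) is nonsingular (its discriminant is nonzero) and has j-invariant equal to −4t³(t + 8). -/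
/-!
Write `D = t² - 4t + 12`, `m = t(t + 8)/D` and `n = (t + 6)(t + 8)/D`, so that the curve is
`y² = x³ - 3mx - 2n`, with discriminant `1728(m³ - n²)` and `j = 1728m³/(m³ - n²)`. The identity
`(t + 6)²D = t³(t + 8) + 432` collapses `m³ - n²` to `-432(t + 8)²/D³`, which vanishes only at
`t = -8`, and in the quotient defining `j` the denominators and two factors `t + 8` cancel.
-/

section CommRing

variable {R : Type*} [CommRing R]

lemma disc_neg_three_mul_neg_two_mul (m n : R) :
    -16 * (4 * (-(3 * m)) ^ 3 + 27 * (-(2 * n)) ^ 2) = 1728 * (m ^ 3 - n ^ 2) := by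
  ring

lemma add_six_sq_mul_quadratic (t : R) :
    (t + 6) ^ 2 * (t ^ 2 - 4 * t + 12) = t ^ 3 * (t + 8) + 432 := by
  ring

end CommRing

section Field

variable {K : Type*} [Field K]

lemma cube_sub_sq_eq_neg_div {t : K} (hD : t ^ 2 - 4 * t + 12 ≠ 0) :
    (t * (t + 8) / (t ^ 2 - 4 * t + 12)) ^ 3 - ((t + 6) * (t + 8) / (t ^ 2 - 4 * t + 12)) ^ 2 =
      -432 * (t + 8) ^ 2 / (t ^ 2 - 4 * t + 12) ^ 3 := by
  have key := add_six_sq_mul_quadratic t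
  generalize t ^ 2 - 4 * t + 12 = D at hD key ⊢
  calc
    (t * (t + 8) / D) ^ 3 - ((t + 6) * (t + 8) / D) ^ 2
      = (t + 8) ^ 2 * (t ^ 3 * (t + 8) - (t + 6) ^ 2 * D) / D ^ 3 := by field_simp
    _ = -432 * (t + 8) ^ 2 / D ^ 3 := by rw [key]; ring

lemma neg_mul_cube_div_disc {m n : K} (h : (1728 : K) ≠ 0) :
    -1728 * (4 * (-(3 * m))) ^ 3 / (1728 * (m ^ 3 - n ^ 2)) = 1728 * m ^ 3 / (m ^ 3 - n ^ 2) := by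
  rw [show -1728 * (4 * (-(3 * m))) ^ 3 = 1728 * (1728 * m ^ 3) by ring, mul_div_mul_left _ _ h]

theorem stmt_13_general (h2 : (2 : K) ≠ 0) (h3 : (3 : K) ≠ 0) {t : K} (ht : t ≠ -8)
    (hD : t ^ 2 - 4 * t + 12 ≠ 0) {a b : K}
    (ha : a = -((3 * t ^ 2 + 24 * t) / (t ^ 2 - 4 * t + 12)))
    (hb : b = -((2 * t ^ 2 + 28 * t + 96) / (t ^ 2 - 4 * t + 12))) :
    -16 * (4 * a ^ 3 + 27 * b ^ 2) ≠ 0 ∧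
      -1728 * (4 * a) ^ 3 / (-16 * (4 * a ^ 3 + 27 * b ^ 2)) = -4 * t ^ 3 * (t + 8) := by
  have ht8 : t + 8 ≠ 0 := fun h => ht (eq_neg_of_add_eq_zero_left h)
  have h1728 : (1728 : K) ≠ 0 := by
    rw [show (1728 : K) = 2 ^ 6 * 3 ^ 3 by norm_num]
    exact mul_ne_zero (pow_ne_zero _ h2) (pow_ne_zero _ h3)
  have h432 : (432 : K) ≠ 0 := fun h => h1728 (by linear_combination 4 * h)
  have ham : a = -(3 * (t * (t + 8) / (t ^ 2 - 4 * t + 12))) := by rw [ha]; ring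
  have hbn : b = -(2 * ((t + 6) * (t + 8) / (t ^ 2 - 4 * t + 12))) := by rw [hb]; ring
  rw [ham, hbn, disc_neg_three_mul_neg_two_mul, neg_mul_cube_div_disc h1728,
    cube_sub_sq_eq_neg_div hD]
  refine ⟨mul_ne_zero h1728 (div_ne_zero (mul_ne_zero (neg_ne_zero.mpr h432)
    (pow_ne_zero _ ht8)) (pow_ne_zero _ hD)), ?_⟩
  generalize t ^ 2 - 4 * t + 12 = D at hD ⊢
  field_simp
  ring

end Field

lemma sq_sub_four_mul_add_twelve_pos {R : Type*} [CommRing R] [LinearOrder R]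
    [IsStrictOrderedRing R] (t : R) : 0 < t ^ 2 - 4 * t + 12 := by
  rw [show t ^ 2 - 4 * t + 12 = (t - 2) ^ 2 + 8 by ring]
  positivity

theorem stmt_13 (t : ℚ) (ht : t ≠ -8) (a b : ℚ)
    (ha : a = -((3 * t ^ 2 + 24 * t) / (t ^ 2 - 4 * t + 12)))
    (hb : b = -((2 * t ^ 2 + 28 * t + 96) / (t ^ 2 - 4 * t + 12))) :
    -16 * (4 * a ^ 3 + 27 * b ^ 2) ≠ 0 ∧
      -1728 * (4 * a) ^ 3 / (-16 * (4 * a ^ 3 + 27 * b ^ 2)) = -4 * t ^ 3 * (t + 8) :=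
  stmt_13_general two_ne_zero three_ne_zero ht (sq_sub_four_mul_add_twelve_pos t).ne' ha hb
end

section
/- Let u, j ∈ ℚ with j ≠ 0 and u ≠ 1, and set c = −4(j − 1728)/(27j). If u⁴ − 4u³ + 6u² + 4(7 + 54c)u + (17 + 108c) = 0, then j = −27648(2u + 1)/(u − 1)⁴; moreover, setting t = 12/(u − 1), one has j = −4t³(t + 8). -/
/-!
The quartic equals `(u - 1) ^ 4 + 4 * (2 * u + 1) * (27 * c + 4)`, and the value of `c` makes
`27 * c + 4 = 4 * 1728 / j`. Its vanishing is therefore the linear equation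
`j * (u - 1) ^ 4 = -27648 * (2 * u + 1)` in `j`. For `t = 12 / (u - 1)` one has
`t + 8 = 4 * (2 * u + 1) / (u - 1)`, which gives the second form of `j`.
-/

theorem quartic_eq_sub_one_pow_four_add {R : Type*} [CommRing R] (u c : R) :
    u ^ 4 - 4 * u ^ 3 + 6 * u ^ 2 + 4 * (7 + 54 * c) * u + (17 + 108 * c) =
      (u - 1) ^ 4 + 4 * (2 * u + 1) * (27 * c + 4) := by
  ring

section Field

variable {K : Type*} [Field K] {u j c : K}

theorem twentySeven_mul_add_four_eq_div (h3 : (3 : K) ≠ 0) (hj : j ≠ 0)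
    (hc : c = -4 * (j - 1728) / (27 * j)) : 27 * c + 4 = 6912 / j := by
  have h27 : (27 : K) ≠ 0 := by
    convert pow_ne_zero 3 h3 using 1
    norm_num
  rw [hc]
  field_simp
  ring

theorem quartic_eq_zero_iff_mul_sub_one_pow_four_eq (h3 : (3 : K) ≠ 0) (hj : j ≠ 0)
    (hc : c = -4 * (j - 1728) / (27 * j)) :
    u ^ 4 - 4 * u ^ 3 + 6 * u ^ 2 + 4 * (7 + 54 * c) * u + (17 + 108 * c) = 0 ↔
      j * (u - 1) ^ 4 = -27648 * (2 * u + 1) := by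
  have clear_denominator :
      j * ((u - 1) ^ 4 + 4 * (2 * u + 1) * (6912 / j)) =
        j * (u - 1) ^ 4 - -27648 * (2 * u + 1) := by
    field_simp
    ring
  rw [quartic_eq_sub_one_pow_four_add, twentySeven_mul_add_four_eq_div h3 hj hc,
    ← mul_eq_zero_iff_left hj, clear_denominator, sub_eq_zero]

theorem neg_four_mul_pow_three_mul_add_eight_of_eq_div {t : K} (hu : u ≠ 1)
    (ht : t = 12 / (u - 1)) :
    -4 * t ^ 3 * (t + 8) = -27648 * (2 * u + 1) / (u - 1) ^ 4 := by
  have hu₁ : u - 1 ≠ 0 := sub_ne_zero.mpr hu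
  have ht8 : t + 8 = 4 * (2 * u + 1) / (u - 1) := by
    rw [ht]
    field_simp
    ring
  rw [ht8, ht]
  field_simp
  ring

theorem stmt_14_general (h3 : (3 : K) ≠ 0) (hj : j ≠ 0) (hu : u ≠ 1)
    (hc : c = -4 * (j - 1728) / (27 * j))
    (h : u ^ 4 - 4 * u ^ 3 + 6 * u ^ 2 + 4 * (7 + 54 * c) * u + (17 + 108 * c) = 0) :
    j = -27648 * (2 * u + 1) / (u - 1) ^ 4 ∧
      ∀ t : K, t = 12 / (u - 1) → j = -4 * t ^ 3 * (t + 8) := by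
  have hj_eq : j = -27648 * (2 * u + 1) / (u - 1) ^ 4 :=
    eq_div_of_mul_eq (pow_ne_zero 4 (sub_ne_zero.mpr hu))
      ((quartic_eq_zero_iff_mul_sub_one_pow_four_eq h3 hj hc).mp h)
  exact ⟨hj_eq, fun t ht ↦
    hj_eq.trans (neg_four_mul_pow_three_mul_add_eight_of_eq_div hu ht).symm⟩

end Field

theorem stmt_14 (u j : ℚ) (hj : j ≠ 0) (hu : u ≠ 1)
    (c : ℚ) (hc : c = -4 * (j - 1728) / (27 * j))
    (h : u ^ 4 - 4 * u ^ 3 + 6 * u ^ 2 + 4 * (7 + 54 * c) * u + (17 + 108 * c) = 0) :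
    j = -27648 * (2 * u + 1) / (u - 1) ^ 4 ∧
      ∀ t : ℚ, t = 12 / (u - 1) → j = -4 * t ^ 3 * (t + 8) :=
  stmt_14_general three_ne_zero hj hu hc h
end
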